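/- Let A : ℤ³ → ℤ³ be the additive group homomorphism given by left multiplication by the integer matrix [[1,-1,2],[1,2,-1],[-2,-1,-1]] on column vectors, and let ε : ℤ³ → ℤ be the augmentation homomorphism ε(x,y,z) = x + y + z. Then the range of A is contained in the kernel of ε, and the quotient group (ker ε)/(range A) is isomorphic to ℤ/3ℤ. -/

import Mathlib

/-- The boundary matrix of the disoriented chain complex of the left-handed trefoil. -/
def trefoilBoundaryMatrix : Matrix (Fin 3) (Fin 3) ℤ :=
  !![1, -1, 2; 1, 2, -1; -2, -1, -1]

/-- The additive group homomorphism `ℤ³ → ℤ³` given by left multiplication by the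
matrix `[[1,-1,2],[1,2,-1],[-2,-1,-1]]` on column vectors. -/
def trefoilBoundaryHom : (Fin 3 → ℤ) →+ (Fin 3 → ℤ) :=
  (Matrix.mulVecLin trefoilBoundaryMatrix).toAddMonoidHom

/-- The augmentation homomorphism `ε(x,y,z) = x + y + z` on `ℤ³`. -/
def augmentation : (Fin 3 → ℤ) →+ ℤ where
  toFun x := x 0 + x 1 + x 2
  map_zero' := rfl
  map_add' x y := by simp [Pi.add_apply]; ring

theorem trefoil_apply (x : Fin 3 → ℤ) :
    trefoilBoundaryHom x =
      ![x 0 - x 1 + 2 * x 2, x 0 + 2 * x 1 - x 2, -2 * x 0 - x 1 - x 2] := by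
  ext i
  fin_cases i <;>
    simp [trefoilBoundaryHom, trefoilBoundaryMatrix, Matrix.mulVec, dotProduct,
      Fin.sum_univ_three] <;> ring

theorem mem_aug_ker (x : Fin 3 → ℤ) : x ∈ augmentation.ker ↔ x 0 + x 1 + x 2 = 0 := Iff.rfl

/-- The map `(x,y,z) ↦ y - x mod 3`. -/
def diffHom : augmentation.ker →+ ZMod 3 where
  toFun x := ((x.1 1 - x.1 0 : ℤ) : ZMod 3)
  map_zero' := by simp
  map_add' x y := by simp; ring

theorem diffHom_apply (x : augmentation.ker) :
    diffHom x = ((x.1 1 - x.1 0 : ℤ) : ZMod 3) := rfl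

theorem diffHom_surj : Function.Surjective diffHom := by
  intro t
  obtain ⟨n, rfl⟩ := ZMod.intCast_surjective t
  refine ⟨⟨![0, n, -n], ?_⟩, ?_⟩
  · rw [mem_aug_ker]; simp
  · rw [diffHom_apply]; simp

theorem diffHom_ker :
    trefoilBoundaryHom.range.addSubgroupOf augmentation.ker = diffHom.ker := by
  ext ⟨v, hv⟩
  rw [AddSubgroup.mem_addSubgroupOf, AddMonoidHom.mem_ker, diffHom_apply,
    ZMod.intCast_zmod_eq_zero_iff_dvd]
  rw [mem_aug_ker] at hv
  constructor
  · rintro ⟨x, hx⟩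
    rw [trefoil_apply] at hx
    simp only at hx
    subst hx
    refine ⟨x 1 - x 2, ?_⟩
    simp
    ring
  · rintro ⟨k, hk⟩
    refine ⟨![v 0 + k, k, 0], ?_⟩
    rw [trefoil_apply]
    simp only at hk
    push_cast at hk
    ext i
    fin_cases i <;> simp <;> linarith

/-- The range of the boundary homomorphism is contained in the kernel of the
augmentation, and the quotient `(ker ε)/(range ∂)` is isomorphic to `ℤ/3ℤ`. -/
theorem stmt_1 :
    trefoilBoundaryHom.range ≤ augmentation.ker ∧
      Nonempty
        ((augmentation.ker ⧸ trefoilBoundaryHom.range.addSubgroupOf augmentation.ker)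
          ≃+ ZMod 3) := by
  refine ⟨?_, ⟨(QuotientAddGroup.quotientAddEquivOfEq diffHom_ker).trans
    (QuotientAddGroup.quotientKerEquivOfSurjective diffHom diffHom_surj)⟩⟩
  rintro _ ⟨x, rfl⟩
  rw [trefoil_apply, mem_aug_ker]
  simp
  ring
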